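/- Let $0 < a < b$, $s \in (0,1)$, and let $M > 0$ satisfy $s(1-s)u^{s-2} \le M$ for all $u \in [a,b]$. Then for every $x \in [a,b]$: $\left| L_s^s(a,b) - x^s + s\,(x - A(a,b))\,x^{s-1} \right| \le 3M \cdot \frac{s^2 + 3s + 4}{(s+1)(s+2)(s+3)} \Big[ \frac{(b-a)^2}{24} + \frac{1}{2}\big(x - A(a,b)\big)^2 \Big] \le \frac{M(b-a)^2}{2} \cdot \frac{s^2 + 3s + 4}{(s+1)(s+2)(s+3)}$. In particular, taking $x = A(a,b)$: $\left| L_s^s(a,b) - A(a,b)^s \right| \le \frac{M(b-a)^2}{8} \cdot \frac{s^2 + 3s + 4}{(s+1)(s+2)(s+3)}$. -/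

import Mathlib

open MeasureTheory Set intervalIntegral

lemma mono_aux (a b : ℝ) (f f' : ℝ → ℝ) (hf : ∀ t ∈ Icc a b, HasDerivAt f (f' t) t)
    (h0 : ∀ t ∈ Icc a b, 0 ≤ f' t) : MonotoneOn f (Icc a b) := by
  apply monotoneOn_of_deriv_nonneg (convex_Icc a b)
  · exact fun t ht => (hf t ht).continuousAt.continuousWithinAt
  · exact fun t ht => (hf t (interior_subset ht)).differentiableAt.differentiableWithinAt
  · intro t ht
    rw [(hf t (interior_subset ht)).deriv]
    exact h0 t (interior_subset ht)

lemma tangent_aux (a b : ℝ) (f g h : ℝ → ℝ)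
    (hf : ∀ t ∈ Icc a b, HasDerivAt f (g t) t) (hg : ∀ t ∈ Icc a b, HasDerivAt g (h t) t)
    (h0 : ∀ t ∈ Icc a b, 0 ≤ h t) (x : ℝ) (hx : x ∈ Icc a b) (t : ℝ) (ht : t ∈ Icc a b) :
    0 ≤ f t - f x - g x * (t - x) := by
  have hm := mono_aux a b g h hg h0
  have hd : ∀ u ∈ Icc a b, HasDerivAt (fun t => f t - g x * (t - x)) (g u - g x) u := by
    intro u hu
    have := (hf u hu).sub (((hasDerivAt_id u).sub_const x).const_mul (g x))
    refine HasDerivAt.congr_deriv this ?_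
    simp
  rcases le_total x t with hxt | hxt
  · have := mono_aux x t _ _ (fun u hu => hd u ⟨hx.1.trans hu.1, hu.2.trans ht.2⟩)
      (fun u hu => sub_nonneg.2 (hm hx ⟨hx.1.trans hu.1, hu.2.trans ht.2⟩ hu.1))
      (left_mem_Icc.2 hxt) (right_mem_Icc.2 hxt) hxt
    simp only [sub_self, mul_zero, sub_zero] at this
    linarith
  · have := mono_aux t x _ _ (fun u hu => (hd u ⟨ht.1.trans hu.1, hu.2.trans hx.2⟩).neg)
      (fun u hu => by
        have := hm ⟨ht.1.trans hu.1, hu.2.trans hx.2⟩ hx hu.2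
        linarith)
      (left_mem_Icc.2 hxt) (right_mem_Icc.2 hxt) hxt
    simp only [Pi.neg_apply, sub_self, mul_zero, sub_zero] at this
    linarith

lemma integ_aux (a b : ℝ) (hab : a ≤ b) (F f g h : ℝ → ℝ)
    (hF : ∀ t ∈ Icc a b, HasDerivAt F (f t) t)
    (hf : ∀ t ∈ Icc a b, HasDerivAt f (g t) t) (hg : ∀ t ∈ Icc a b, HasDerivAt g (h t) t)
    (h0 : ∀ t ∈ Icc a b, 0 ≤ h t) (x : ℝ) (hx : x ∈ Icc a b) :
    0 ≤ F b - F a - f x * (b - a) - g x * ((b - x) ^ 2 - (a - x) ^ 2) / 2 := by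
  have hd : ∀ u ∈ Icc a b, HasDerivAt (fun t => F t - f x * t - g x / 2 * (t - x) ^ 2)
      (f u - f x - g x * (u - x)) u := by
    intro u hu
    have := ((hF u hu).sub ((hasDerivAt_id u).const_mul (f x))).sub
      ((((hasDerivAt_id u).sub_const x).pow 2).const_mul (g x / 2))
    refine HasDerivAt.congr_deriv this ?_
    simp
    ring
  have := mono_aux a b _ _ hd (tangent_aux a b f g h hf hg h0 x hx)
    (left_mem_Icc.2 hab) (right_mem_Icc.2 hab) hab
  simp only at this
  linarith

lemma main_aux (a b : ℝ) (ha : 0 < a) (hab : a < b) (s : ℝ) (hs : s ∈ Set.Ioo (0:ℝ) 1)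
    (M : ℝ) (hM : 0 < M) (hbd : ∀ u ∈ Set.Icc a b, s * (1 - s) * u ^ (s - 2) ≤ M)
    (x : ℝ) (hx : x ∈ Icc a b) :
    |(b ^ (s + 1) - a ^ (s + 1)) / ((s + 1) * (b - a)) - x ^ s
      + s * (x - ((a + b) / 2)) * x ^ (s - 1)|
      ≤ M * ((b - a) ^ 2 / 24 + (1 / 2) * (x - ((a + b) / 2)) ^ 2) := by
  obtain ⟨hs0, hs1⟩ := hs
  have hs2 : s + 1 ≠ 0 := by linarith
  have hF : ∀ t ∈ Icc a b, HasDerivAt (fun t : ℝ => t ^ (s + 1) / (s + 1)) (t ^ s) t := by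
    intro t ht
    have ht0 : t ≠ 0 := (ha.trans_le ht.1).ne'
    have := (Real.hasDerivAt_rpow_const (p := s + 1) (Or.inl ht0)).div_const (s + 1)
    refine HasDerivAt.congr_deriv this ?_
    rw [add_sub_cancel_right]
    field_simp
  have hf : ∀ t ∈ Icc a b, HasDerivAt (fun t : ℝ => t ^ s) (s * t ^ (s - 1)) t := by
    intro t ht
    exact Real.hasDerivAt_rpow_const (Or.inl (ha.trans_le ht.1).ne')
  have hg : ∀ t ∈ Icc a b,
      HasDerivAt (fun t : ℝ => s * t ^ (s - 1)) (-(s * (1 - s) * t ^ (s - 2))) t := by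
    intro t ht
    have := (Real.hasDerivAt_rpow_const (p := s - 1)
      (Or.inl (ha.trans_le ht.1).ne')).const_mul s
    refine HasDerivAt.congr_deriv this ?_
    rw [show s - 1 - 1 = s - 2 by ring]
    ring
  have h1 := integ_aux a b hab.le _ _ _ _ (fun t ht => (hF t ht).neg) (fun t ht => (hf t ht).neg)
    (fun t ht => (hg t ht).neg) (fun t ht => by
      have : 0 < t := ha.trans_le ht.1
      have h3 : 0 < 1 - s := by linarith
      rw [neg_neg]
      positivity) x hx
  have p3 : ∀ t ∈ Icc a b, HasDerivAt (fun t : ℝ => M / 6 * (t - x) ^ 3) (M / 2 * (t - x) ^ 2) t := by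
    intro t _
    have := (((hasDerivAt_id t).sub_const x).pow 3).const_mul (M / 6)
    refine HasDerivAt.congr_deriv this ?_
    simp
    ring
  have p2 : ∀ t ∈ Icc a b, HasDerivAt (fun t : ℝ => M / 2 * (t - x) ^ 2) (M * (t - x)) t := by
    intro t _
    have := (((hasDerivAt_id t).sub_const x).pow 2).const_mul (M / 2)
    refine HasDerivAt.congr_deriv this ?_
    simp
    ring
  have p1 : ∀ t ∈ Icc a b, HasDerivAt (fun t : ℝ => M * (t - x)) M t := by
    intro t _
    simpa using ((hasDerivAt_id t).sub_const x).const_mul M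
  have h2 := integ_aux a b hab.le _ _ _ _ (fun t ht => (hF t ht).add (p3 t ht))
    (fun t ht => (hf t ht).add (p2 t ht))
    (fun t ht => (hg t ht).add (p1 t ht)) (fun t ht => by
      have := hbd t ht
      linarith) x hx
  simp only [Pi.neg_apply, Pi.add_apply] at h1 h2
  have hba : 0 < b - a := by linarith
  have e : (b ^ (s + 1) - a ^ (s + 1)) / ((s + 1) * (b - a)) - x ^ s
      + s * (x - ((a + b) / 2)) * x ^ (s - 1) =
      (b ^ (s + 1) / (s + 1) - a ^ (s + 1) / (s + 1) - x ^ s * (b - a)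
        - s * x ^ (s - 1) * ((b - x) ^ 2 - (a - x) ^ 2) / 2) / (b - a) := by
    field_simp
    ring
  rw [e, abs_le]
  constructor
  · rw [le_div_iff₀ hba]
    linarith
  · refine le_trans (div_nonpos_of_nonpos_of_nonneg ?_ hba.le) (by positivity)
    linarith

theorem stmt15 (a b : ℝ) (ha : 0 < a) (hab : a < b) (s : ℝ) (hs : s ∈ Set.Ioo (0:ℝ) 1)
    (M : ℝ) (hM : 0 < M) (hbd : ∀ u ∈ Set.Icc a b, s * (1 - s) * u ^ (s - 2) ≤ M) :
    (∀ x ∈ Set.Icc a b,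
        |(b ^ (s + 1) - a ^ (s + 1)) / ((s + 1) * (b - a)) - x ^ s + s * (x - ((a + b) / 2)) * x ^ (s - 1)|
            ≤ 3 * M * ((s ^ 2 + 3 * s + 4) / ((s + 1) * (s + 2) * (s + 3))) *
                ((b - a) ^ 2 / 24 + (1 / 2) * (x - ((a + b) / 2)) ^ 2)
          ∧ 3 * M * ((s ^ 2 + 3 * s + 4) / ((s + 1) * (s + 2) * (s + 3))) *
                ((b - a) ^ 2 / 24 + (1 / 2) * (x - ((a + b) / 2)) ^ 2)
            ≤ M * (b - a) ^ 2 / 2 * ((s ^ 2 + 3 * s + 4) / ((s + 1) * (s + 2) * (s + 3))))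
      ∧ |(b ^ (s + 1) - a ^ (s + 1)) / ((s + 1) * (b - a)) - ((a + b) / 2) ^ s|
          ≤ M * (b - a) ^ 2 / 8 * ((s ^ 2 + 3 * s + 4) / ((s + 1) * (s + 2) * (s + 3))) := by
  have hs' := hs
  obtain ⟨hs0, hs1⟩ := hs'
  have hC : 1 ≤ 3 * ((s ^ 2 + 3 * s + 4) / ((s + 1) * (s + 2) * (s + 3))) := by
    rw [← mul_div_assoc, le_div_iff₀ (by positivity)]
    nlinarith [mul_pos hs0 (sub_pos.2 hs1), mul_pos (mul_pos hs0 hs0) (sub_pos.2 hs1)]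
  set C := (s ^ 2 + 3 * s + 4) / ((s + 1) * (s + 2) * (s + 3)) with hCdef
  have key : ∀ x ∈ Icc a b,
      |(b ^ (s + 1) - a ^ (s + 1)) / ((s + 1) * (b - a)) - x ^ s
        + s * (x - ((a + b) / 2)) * x ^ (s - 1)|
        ≤ 3 * M * C * ((b - a) ^ 2 / 24 + (1 / 2) * (x - ((a + b) / 2)) ^ 2) := by
    intro x hx
    refine (main_aux a b ha hab s hs M hM hbd x hx).trans ?_
    apply mul_le_mul_of_nonneg_right _ (by positivity)
    nlinarith
  refine ⟨fun x hx => ⟨key x hx, ?_⟩, ?_⟩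
  · have hMC : 0 ≤ M * C := by
      have : 0 ≤ C := by linarith
      positivity
    have hq : 0 ≤ (b - x) * (x - a) := mul_nonneg (sub_nonneg.2 hx.2) (sub_nonneg.2 hx.1)
    nlinarith [mul_nonneg hMC hq]
  · have := key ((a + b) / 2) ⟨by linarith, by linarith⟩
    simp only [sub_self, mul_zero, zero_mul, add_zero] at this
    refine this.trans (le_of_eq ?_)
    ring
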